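/- For every integer t ≥ 2, every q-ary t-traceability code of length N is also a q-ary t-parent-identifying code of length N. -/

import Mathlib

/-- The descendant set of a set `D` of codewords: all words `x` such that in every
coordinate `i`, the symbol `x i` appears as the `i`-th symbol of some codeword of `D`. -/
def descSet {N q : ℕ} (D : Finset (Fin N → Fin q)) : Set (Fin N → Fin q) :=
  {x | ∀ i : Fin N, ∃ c ∈ D, x i = c i}

/-- `C` is a `t`-traceability (t-TA) code: for every `D ⊆ C` with `|D| ≤ t` and every
`x ∈ desc(D)`, the minimum of `d(x,c)` over `c ∈ D` is strictly smaller than `d(x,y)`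
for every `y ∈ C \ D`. -/
def IsTA {N q : ℕ} (t : ℕ) (C : Finset (Fin N → Fin q)) : Prop :=
  ∀ D : Finset (Fin N → Fin q), D ⊆ C → D.card ≤ t →
    ∀ x ∈ descSet D, ∃ c ∈ D, ∀ y ∈ C \ D, hammingDist x c < hammingDist x y

/-- `C` is a `t`-parent-identifying (t-IPP) code: for every word `x`, if the collection
`P_t(x)` of parent sets `D ⊆ C`, `|D| ≤ t`, `x ∈ desc(D)` is nonempty, then the
intersection of all members of `P_t(x)` is nonempty. -/
def IsIPP {N q : ℕ} (t : ℕ) (C : Finset (Fin N → Fin q)) : Prop :=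
  ∀ x : Fin N → Fin q,
    (∃ D : Finset (Fin N → Fin q), D ⊆ C ∧ D.card ≤ t ∧ x ∈ descSet D) →
    ∃ c : Fin N → Fin q,
      ∀ D : Finset (Fin N → Fin q), D ⊆ C → D.card ≤ t → x ∈ descSet D → c ∈ D

theorem mem_of_minimalFor_of_forall_mem_sdiff_lt {α β : Type*} [DecidableEq α] [Preorder β]
    {f : α → β} {C D : Finset α} {a c : α} (hDC : D ⊆ C) (ha : a ∈ D)
    (hlt : ∀ y ∈ C \ D, f a < f y) (hc : MinimalFor (· ∈ C) f c) : c ∈ D := by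
  by_contra hcD
  exact hc.not_lt (hDC ha) (hlt c (Finset.mem_sdiff.mpr ⟨hc.prop, hcD⟩))

namespace IsTA

variable {N q t : ℕ} {C D : Finset (Fin N → Fin q)} {x c : Fin N → Fin q}

theorem nonempty_of_mem_descSet (hC : IsTA t C) (hDC : D ⊆ C) (hDt : D.card ≤ t)
    (hx : x ∈ descSet D) : D.Nonempty :=
  let ⟨a, ha, _⟩ := hC D hDC hDt x hx
  ⟨a, ha⟩

theorem mem_of_minimalFor_hammingDist (hC : IsTA t C) (hc : MinimalFor (· ∈ C) (hammingDist x) c)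
    (hDC : D ⊆ C) (hDt : D.card ≤ t) (hx : x ∈ descSet D) : c ∈ D :=
  let ⟨_, ha, hlt⟩ := hC D hDC hDt x hx
  mem_of_minimalFor_of_forall_mem_sdiff_lt hDC ha hlt hc

end IsTA

/-- For every `t ≥ 2`, every `q`-ary `t`-traceability code of length `N` is also a
`q`-ary `t`-parent-identifying code of length `N`. -/
theorem stmt_18 (N q t : ℕ) (ht : 2 ≤ t) (C : Finset (Fin N → Fin q))
    (hC : IsTA t C) : IsIPP t C := by
  rintro x ⟨D, hDC, hDt, hx⟩
  have hne : C.Nonempty := (hC.nonempty_of_mem_descSet hDC hDt hx).mono hDC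
  -- A codeword nearest to `x` is a common member of all parent sets of `x`.
  obtain ⟨c, hc⟩ := C.exists_minimalFor (hammingDist x) hne
  exact ⟨c, fun _ => hC.mem_of_minimalFor_hammingDist hc⟩
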